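/- Let n ≥ 1, let f : ℝⁿ → ℝ be twice continuously differentiable, let 0 < α ≤ 1, H ≥ 0, and let p : Fin n → ℝ with p_i > 0 for all i. Assume f is periodic with period p_i in the i-th coordinate for every i, and that every second partial derivative is α-Hölder with constant H: |∂²_{ij}f(x) − ∂²_{ij}f(y)| ≤ H·‖x − y‖^α for all indices i, j and all x, y. Then for every coordinate index k and all x, y ∈ ℝⁿ, |∂f/∂x_k(x) − ∂f/∂x_k(y)| ≤ 2n · H · p_k · ‖x − y‖^α. -/

import Mathlib

/-- Rolle along a period: the directional derivative vanishes somewhere on the segment. -/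
theorem aux_rolle {E : Type*} [NormedAddCommGroup E] [NormedSpace ℝ E] (g : E → ℝ)
    (hg : Differentiable ℝ g) (e : E) (p : ℝ) (hp : 0 < p)
    (hper : ∀ x, g (x + p • e) = g x) (x : E) :
    ∃ t, 0 < t ∧ t < p ∧ fderiv ℝ g (x + t • e) e = 0 := by
  have hd : ∀ t : ℝ, HasDerivAt (fun t : ℝ => g (x + t • e)) (fderiv ℝ g (x + t • e) e) t := by
    intro t
    have h1 : HasDerivAt (fun t : ℝ => x + t • e) e t := by
      simpa using ((hasDerivAt_id t).smul_const e).const_add x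
    exact (hg (x + t • e)).hasFDerivAt.comp_hasDerivAt t h1
  obtain ⟨t, ht, h⟩ := exists_hasDerivAt_eq_zero (f := fun t : ℝ => g (x + t • e)) hp
    (fun t _ => (hd t).continuousAt.continuousWithinAt)
    (by simp [hper]) (fun t _ => hd t)
  exact ⟨t, ht.1, ht.2, h⟩

theorem aux_symm {E : Type*} [NormedAddCommGroup E] [NormedSpace ℝ E] (f : E → ℝ)
    (hf : ContDiff ℝ 2 f) (x u v : E) :
    fderiv ℝ (fun w => fderiv ℝ f w u) x v = fderiv ℝ (fun w => fderiv ℝ f w v) x u := by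
  have hd : Differentiable ℝ (fderiv ℝ f) :=
    (hf.fderiv_right (m := 1) (by norm_num)).differentiable (by norm_num)
  have key : ∀ a b : E, fderiv ℝ (fun w => fderiv ℝ f w a) x b = fderiv ℝ (fderiv ℝ f) x b a := by
    intro a b
    rw [fderiv_clm_apply (hd x) (differentiableAt_const a)]
    simp
  rw [key, key]
  exact (hf.contDiffAt.isSymmSndFDerivAt (by simp)) v u

/-- Rescaled Lemma 3.5, Hölder seminorm estimate: if `f : ℝⁿ → ℝ` is `C²`, periodic
with period `p_i` in every coordinate `i`, and all second partial derivatives are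
`α`-Hölder with constant `H`, then each first partial `∂f/∂x_k` is `α`-Hölder with
constant `2n · H · p_k`. -/
theorem periodic_first_derivative_holder_bound
    (n : ℕ) (hn : 1 ≤ n) (f : EuclideanSpace ℝ (Fin n) → ℝ)
    (hf : ContDiff ℝ 2 f) (α H : ℝ) (p : Fin n → ℝ)
    (hα0 : 0 < α) (hα1 : α ≤ 1) (hH : 0 ≤ H) (hp : ∀ i, 0 < p i)
    (hper : ∀ i x, f (x + p i • EuclideanSpace.single i 1) = f x)
    (hHolder : ∀ (i j : Fin n) (x y : EuclideanSpace ℝ (Fin n)),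
      |fderiv ℝ (fun w => fderiv ℝ f w (EuclideanSpace.single i 1)) x
          (EuclideanSpace.single j 1) -
        fderiv ℝ (fun w => fderiv ℝ f w (EuclideanSpace.single i 1)) y
          (EuclideanSpace.single j 1)| ≤ H * ‖x - y‖ ^ α) :
    ∀ (k : Fin n) (x y : EuclideanSpace ℝ (Fin n)),
      |fderiv ℝ f x (EuclideanSpace.single k 1) -
        fderiv ℝ f y (EuclideanSpace.single k 1)| ≤
          2 * n * H * p k * ‖x - y‖ ^ α := by
  intro k x y
  have hd1 : Differentiable ℝ f := hf.differentiable (by norm_num)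
  have hd2 : Differentiable ℝ (fderiv ℝ f) :=
    (hf.fderiv_right (m := 1) (by norm_num)).differentiable (by norm_num)
  have hdg : ∀ i : Fin n, Differentiable ℝ
      (fun w => fderiv ℝ f w (EuclideanSpace.single i 1)) := fun i =>
    hd2.clm_apply (differentiable_const _)
  have hpk := hp k
  have hgper : ∀ (i : Fin n) (z : EuclideanSpace ℝ (Fin n)),
      fderiv ℝ f (z + p k • EuclideanSpace.single k 1) (EuclideanSpace.single i 1)
        = fderiv ℝ f z (EuclideanSpace.single i 1) := by
    intro i z
    rw [← fderiv_comp_add_right]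
    simp only [hper]
  have hnorm : ∀ (z : EuclideanSpace ℝ (Fin n)) (t : ℝ), 0 < t →
      ‖z - (z + t • EuclideanSpace.single k (1 : ℝ))‖ = t := by
    intro z t ht
    simp [norm_smul, abs_of_pos ht]
  have hB0 : 0 ≤ H * p k ^ α := by positivity
  have hsecond : ∀ (i : Fin n) (z : EuclideanSpace ℝ (Fin n)),
      |fderiv ℝ (fun w => fderiv ℝ f w (EuclideanSpace.single k 1)) z
        (EuclideanSpace.single i 1)| ≤ H * p k ^ α := by
    intro i z
    obtain ⟨t, ht0, htp, ht⟩ := aux_rolle _ (hdg i) (EuclideanSpace.single k 1) (p k) hpk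
      (hgper i) z
    have h := hHolder i k z (z + t • EuclideanSpace.single k 1)
    rw [ht, sub_zero, hnorm z t ht0] at h
    rw [aux_symm f hf]
    refine h.trans ?_
    gcongr
  have hsup : ∀ z : EuclideanSpace ℝ (Fin n),
      |fderiv ℝ f z (EuclideanSpace.single k 1)| ≤ H * p k ^ α * p k := by
    intro z
    obtain ⟨t, ht0, htp, ht⟩ := aux_rolle f hd1 (EuclideanSpace.single k 1) (p k) hpk
      (hper k) z
    have hline : ∀ s : ℝ, HasDerivAt
        (fun s : ℝ => fderiv ℝ f (z + s • EuclideanSpace.single k 1) (EuclideanSpace.single k 1))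
        (fderiv ℝ (fun w => fderiv ℝ f w (EuclideanSpace.single k 1))
          (z + s • EuclideanSpace.single k 1) (EuclideanSpace.single k 1)) s := by
      intro s
      have h1 : HasDerivAt (fun s : ℝ => z + s • EuclideanSpace.single k (1 : ℝ))
          (EuclideanSpace.single k (1 : ℝ)) s := by
        simpa using ((hasDerivAt_id s).smul_const (EuclideanSpace.single k (1 : ℝ))).const_add z
      exact (hdg k (z + s • EuclideanSpace.single k 1)).hasFDerivAt.comp_hasDerivAt s h1
    have h := convex_univ.norm_image_sub_le_of_norm_hasDerivWithin_le
      (fun s _ => (hline s).hasDerivWithinAt) (C := H * p k ^ α)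
      (fun s _ => hsecond k _) (Set.mem_univ t) (Set.mem_univ (0 : ℝ))
    simp only [ht, zero_smul, add_zero, sub_zero, zero_sub, norm_neg, Real.norm_eq_abs,
      abs_of_pos ht0] at h
    refine h.trans ?_
    gcongr
  have hn1 : (1 : ℝ) ≤ n := by exact_mod_cast hn
  rcases le_total (p k) ‖x - y‖ with hle | hle
  · have h1 : p k ^ α ≤ ‖x - y‖ ^ α := by gcongr
    calc _ ≤ |fderiv ℝ f x (EuclideanSpace.single k 1)|
          + |fderiv ℝ f y (EuclideanSpace.single k 1)| := abs_sub _ _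
      _ ≤ H * p k ^ α * p k + H * p k ^ α * p k := add_le_add (hsup x) (hsup y)
      _ = 2 * 1 * H * p k * p k ^ α := by ring
      _ ≤ 2 * n * H * p k * ‖x - y‖ ^ α := by gcongr
  · have hop : ∀ z : EuclideanSpace ℝ (Fin n),
        ‖fderiv ℝ (fun w => fderiv ℝ f w (EuclideanSpace.single k 1)) z‖
          ≤ n * (H * p k ^ α) := by
      intro z
      refine ContinuousLinearMap.opNorm_le_bound _ (by positivity) fun v => ?_
      have hv : v = ∑ i, v i • EuclideanSpace.single i (1 : ℝ) := by
        ext j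
        simp [Finset.sum_apply, Pi.single_apply]
      conv_lhs => rw [hv]
      rw [map_sum]
      refine (norm_sum_le _ _).trans ?_
      calc _ ≤ ∑ i : Fin n, ‖v‖ * (H * p k ^ α) := by
            refine Finset.sum_le_sum fun i _ => ?_
            rw [map_smul, norm_smul]
            exact mul_le_mul (PiLp.norm_apply_le v i) (hsecond i z) (norm_nonneg _) (norm_nonneg _)
        _ = _ := by simp; ring
    have h := convex_univ.norm_image_sub_le_of_norm_fderiv_le
      (fun z _ => hdg k z) (fun z _ => hop z) (Set.mem_univ y) (Set.mem_univ x)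
    have h2 : p k ^ α * ‖x - y‖ ≤ p k * ‖x - y‖ ^ α := by
      rcases (norm_nonneg (x - y)).eq_or_lt with h0 | h0
      · rw [← h0, Real.zero_rpow hα0.ne']
        simp
      · have e1 : ‖x - y‖ = ‖x - y‖ ^ (1 - α) * ‖x - y‖ ^ α := by
          rw [← Real.rpow_add h0]; simp
        have e2 : p k = p k ^ α * p k ^ (1 - α) := by
          rw [← Real.rpow_add hpk]; simp
        have e3 : ‖x - y‖ ^ (1 - α) ≤ p k ^ (1 - α) :=
          Real.rpow_le_rpow h0.le hle (by linarith)
        calc p k ^ α * ‖x - y‖ = p k ^ α * ‖x - y‖ ^ (1 - α) * ‖x - y‖ ^ α := by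
              rw [mul_assoc, ← e1]
          _ ≤ p k ^ α * p k ^ (1 - α) * ‖x - y‖ ^ α := by gcongr
          _ = _ := by rw [← e2]
    rw [Real.norm_eq_abs] at h
    have hnn : 0 ≤ n * H * (p k * ‖x - y‖ ^ α) := by positivity
    calc _ ≤ n * (H * p k ^ α) * ‖x - y‖ := h
      _ = n * H * (p k ^ α * ‖x - y‖) := by ring
      _ ≤ n * H * (p k * ‖x - y‖ ^ α) := by gcongr
      _ ≤ 2 * n * H * p k * ‖x - y‖ ^ α := by linarith
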